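/- There exists a partitioned balanced tournament design of side 9; that is, there exists an arrangement of the 153 distinct unordered pairs of an 18-element set V into a 9 × 17 array such that (1) every element of V is contained in precisely one cell of each column, (2) every element of V is contained in at most two cells of any row, (3) in each row, the 9 cells in the first 9 columns form a one-factor of V (a partition of V into 9 pairs), and (4) in each row, the 9 cells in the last 9 columns form a one-factor of V. -/

import Mathlib

/-!
The design is developed from a single row. Take `R = ℤ₃ × ℤ₃` as the set of rows and `R × ℤ₂` as
the set of points. Eight pairs partition the points off the line `{0} × ℤ₂`, and their differences
represent each element off that line exactly once. Translating them by `(r, ε)` therefore gives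
each pair `{x, y}` with distinct first coordinates exactly once; the translates with `ε = 0` fill
the left of row `r`, those with `ε = 1` fill the right, and in both cases the only points missed
are `(r, 0)` and `(r, 1)`, which form the cell of the common column. What remains is to order the
eight translates inside each row so that the columns are one-factors too.
-/

open Equiv

theorem mem_sym2Map_equiv {α β : Type*} (e : α ≃ β) {p : Sym2 α} {x : β} :
    x ∈ p.map e ↔ e.symm x ∈ p := by
  simp [Sym2.mem_map, ← e.eq_symm_apply]

theorem sym2Map_equiv_eq_mk {α β : Type*} (e : α ≃ β) {p : Sym2 α} {x y : β} :
    p.map e = s(x, y) ↔ p = s(e.symm x, e.symm y) := by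
  rw [← (Sym2.map.injective e.injective).eq_iff, Sym2.map_mk, e.apply_symm_apply,
    e.apply_symm_apply]

/-- A partitioned balanced tournament design with rows `R`, columns `C` and points `V`, where `F`
and `L` play the roles of the first `n` and the last `n` columns. That a point lies in at most two
cells of a row is not a field, since it follows from the others: see
`IsPBTD.card_filter_mem_le_two`. -/
structure IsPBTD {R C V : Type*} (T : R → C → Sym2 V) (F L : Set C) : Prop where
  union_eq_univ : F ∪ L = Set.univ
  not_isDiag : ∀ r c, ¬(T r c).IsDiag
  existsUnique_cell : ∀ x y, x ≠ y → ∃! p : R × C, T p.1 p.2 = s(x, y)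
  existsUnique_row : ∀ c x, ∃! r, x ∈ T r c
  existsUnique_first : ∀ r x, ∃! c, c ∈ F ∧ x ∈ T r c
  existsUnique_last : ∀ r x, ∃! c, c ∈ L ∧ x ∈ T r c

namespace IsPBTD

variable {R R' C C' V V' : Type*} {T : R → C → Sym2 V} {F L : Set C}

theorem card_filter_mem_le_two [Fintype C] [DecidableEq V] (hT : IsPBTD T F L) (r : R) (x : V) :
    (Finset.univ.filter fun c => x ∈ T r c).card ≤ 2 := by
  classical
  obtain ⟨a, -, ha⟩ := hT.existsUnique_first r x
  obtain ⟨b, -, hb⟩ := hT.existsUnique_last r x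
  have h_sub : (Finset.univ.filter fun c => x ∈ T r c) ⊆ {a, b} := by
    intro c hc
    have hxc : x ∈ T r c := (Finset.mem_filter.mp hc).2
    have hFL : c ∈ F ∪ L := hT.union_eq_univ ▸ Set.mem_univ c
    rw [Finset.mem_insert, Finset.mem_singleton]
    exact hFL.imp (fun hF => ha c ⟨hF, hxc⟩) (fun hL => hb c ⟨hL, hxc⟩)
  exact (Finset.card_le_card h_sub).trans Finset.card_le_two

theorem reindex (hT : IsPBTD T F L) (ρ : R' ≃ R) (κ : C' ≃ C) (φ : V ≃ V') :
    IsPBTD (fun r c => (T (ρ r) (κ c)).map φ) (κ ⁻¹' F) (κ ⁻¹' L) := by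
  refine ⟨?_, fun r c => ?_, fun x y hxy => ?_, fun c x => ?_, fun r x => ?_, fun r x => ?_⟩
  · rw [← Set.preimage_union, hT.union_eq_univ, Set.preimage_univ]
  · exact (Sym2.isDiag_map φ.injective).not.mpr (hT.not_isDiag _ _)
  · simp only [sym2Map_equiv_eq_mk]
    exact ((prodCongr ρ κ).existsUnique_congr fun _ => Iff.rfl).mpr
      (hT.existsUnique_cell _ _ (φ.symm.injective.ne hxy))
  · simp only [mem_sym2Map_equiv]
    exact (ρ.existsUnique_congr fun _ => Iff.rfl).mpr (hT.existsUnique_row _ _)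
  · simp only [mem_sym2Map_equiv]
    exact (κ.existsUnique_congr fun _ => Iff.rfl).mpr (hT.existsUnique_first _ _)
  · simp only [mem_sym2Map_equiv]
    exact (κ.existsUnique_congr fun _ => Iff.rfl).mpr (hT.existsUnique_last _ _)

end IsPBTD

variable {R I : Type*} [AddGroup R]

/-- A frame starter in `(R × ℤ₂) ∖ ({0} × ℤ₂)`: the pairs `P i` partition this set, and so do their
differences. A difference `d` is recorded as a pair `P i = {x, d + x}`, so that each `P i` accounts
for both differences of its points. -/
structure IsFrameStarter (P : I → Sym2 (R × ZMod 2)) : Prop where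
  fst_ne_zero_of_mem : ∀ i, ∀ x ∈ P i, x.1 ≠ 0
  existsUnique_mem : ∀ x : R × ZMod 2, x.1 ≠ 0 → ∃! i, x ∈ P i
  fst_ne_fst_of_eq_mk : ∀ i x y, P i = s(x, y) → x.1 ≠ y.1
  existsUnique_difference : ∀ d : R × ZMod 2, d.1 ≠ 0 →
    ∃! p : I × (R × ZMod 2), P p.1 = s(p.2, d + p.2)

/-- The array developed from the pairs `P` when row `r` is ordered by the permutation `k r`. The
column `none` is the one common to both halves; `some (i, ε)` is the `i`-th of the other columns in
the left (`ε = 0`) or right (`ε = 1`) half. -/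
def develop (P : I → Sym2 (R × ZMod 2)) (k : R → Perm I) (r : R) :
    Option (I × ZMod 2) → Sym2 (R × ZMod 2)
  | none => s((r, 0), (r, 1))
  | some (i, ε) => (P (k r i)).map (Equiv.addRight (r, ε))

/-- The left (`ε = 0`) or right (`ε = 1`) half of the columns of `develop`, including the common
column. -/
def half (I : Type*) (ε : ZMod 2) : Set (Option (I × ZMod 2)) :=
  {c | ∀ p ∈ c, p.2 = ε}

theorem none_mem_half (ε : ZMod 2) : none ∈ half I ε := by
  simp [half]

theorem some_mem_half {i : I} {ε ε' : ZMod 2} : some (i, ε') ∈ half I ε ↔ ε' = ε := by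
  simp [half]

theorem zmod_two_eq_zero_or_one : ∀ ε : ZMod 2, ε = 0 ∨ ε = 1 := by
  decide

theorem half_zero_union_half_one : half I 0 ∪ half I 1 = Set.univ := by
  ext (_ | ⟨i, ε⟩)
  · simp [none_mem_half]
  · simpa [some_mem_half] using zmod_two_eq_zero_or_one ε

section Develop

variable {P : I → Sym2 (R × ZMod 2)} {k : R → Perm I} {r : R} {i : I} {ε : ZMod 2}
  {x y : R × ZMod 2}

theorem mem_develop_none : x ∈ develop P k r none ↔ x.1 = r := by
  simp [develop, Prod.ext_iff, ← and_or_left, zmod_two_eq_zero_or_one]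

theorem mem_develop_some : x ∈ develop P k r (some (i, ε)) ↔ x - (r, ε) ∈ P (k r i) := by
  rw [develop, mem_sym2Map_equiv, addRight_symm, coe_addRight, sub_eq_add_neg]

theorem develop_some_eq_mk :
    develop P k r (some (i, ε)) = s(x, y) ↔ P (k r i) = s(x - (r, ε), y - (r, ε)) := by
  rw [develop, sym2Map_equiv_eq_mk, addRight_symm, coe_addRight, sub_eq_add_neg, sub_eq_add_neg]

theorem develop_none_of_fst_eq (hxy : x ≠ y) (h_fst : x.1 = y.1) :
    develop P k x.1 none = s(x, y) :=
  (Sym2.mem_and_mem_iff hxy).mp ⟨mem_develop_none.mpr rfl, mem_develop_none.mpr h_fst.symm⟩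

end Develop

namespace IsFrameStarter

variable {P : I → Sym2 (R × ZMod 2)}

theorem not_isDiag_develop (hP : IsFrameStarter P) (k : R → Perm I) (r : R) :
    ∀ c, ¬(develop P k r c).IsDiag
  | none => by simp [develop]
  | some (i, ε) => by
    rw [develop, Sym2.isDiag_map (Equiv.injective _)]
    generalize h : P (k r i) = p
    induction p with | _ x y
    exact fun h_eq => hP.fst_ne_fst_of_eq_mk _ x y h (congrArg Prod.fst h_eq)

theorem existsUnique_develop_eq_of_fst_eq (hP : IsFrameStarter P) (k : R → Perm I)
    {x y : R × ZMod 2} (hxy : x ≠ y) (h_fst : x.1 = y.1) :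
    ∃! p : R × Option (I × ZMod 2), develop P k p.1 p.2 = s(x, y) := by
  refine ⟨(x.1, none), develop_none_of_fst_eq hxy h_fst, ?_⟩
  rintro ⟨r, _ | ⟨i, ε⟩⟩ h
  · have hx : x ∈ develop P k r none := h ▸ Sym2.mem_mk_left x y
    rw [mem_develop_none.mp hx]
  · have h_ne := hP.fst_ne_fst_of_eq_mk _ _ _ (develop_some_eq_mk.mp h)
    exact absurd (congrArg (· - r) h_fst) h_ne

/-- The difference `y - x` determines the pair of the starter, and the position of `x` in that pair
determines the translation. -/
theorem existsUnique_develop_eq_of_fst_ne (hP : IsFrameStarter P) (k : R → Perm I)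
    {x y : R × ZMod 2} (h_fst : x.1 ≠ y.1) :
    ∃! p : R × Option (I × ZMod 2), develop P k p.1 p.2 = s(x, y) := by
  obtain ⟨⟨i, a⟩, hia, h_unique⟩ :=
    hP.existsUnique_difference (y - x) (sub_ne_zero.mpr h_fst.symm)
  obtain ⟨⟨r, ε⟩, h_rε⟩ : ∃ g, g = -a + x := ⟨_, rfl⟩
  refine ⟨(r, some ((k r).symm i, ε)), ?_, ?_⟩
  · have hx : x - (r, ε) = a := by rw [h_rε, sub_eq_iff_eq_add, add_neg_cancel_left]
    have hy : y - (r, ε) = y - x + a := by rw [← hx, sub_add_sub_cancel]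
    simpa only [develop_some_eq_mk, apply_symm_apply, hx, hy] using hia
  · rintro ⟨r', _ | ⟨j, ε'⟩⟩ h
    · have hx : x ∈ develop P k r' none := h ▸ Sym2.mem_mk_left x y
      have hy : y ∈ develop P k r' none := h ▸ Sym2.mem_mk_right x y
      exact absurd ((mem_develop_none.mp hx).trans (mem_develop_none.mp hy).symm) h_fst
    · have h_pair : P (k r' j) = s(x - (r', ε'), y - x + (x - (r', ε'))) := by
        rw [sub_add_sub_cancel]
        exact develop_some_eq_mk.mp h
      obtain ⟨hj, ha⟩ := Prod.ext_iff.mp (h_unique (k r' j, x - (r', ε')) h_pair)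
      have h_translation : ((r', ε') : R × ZMod 2) = (r, ε) := by
        rw [h_rε, eq_neg_add_iff_add_eq]
        exact eq_sub_iff_add_eq.mp ha.symm
      obtain ⟨rfl, rfl⟩ := Prod.mk.inj h_translation
      rw [← (k r').symm_apply_apply j]
      exact congrArg (fun i => (r', some ((k r').symm i, ε'))) hj

theorem existsUnique_mem_develop (hP : IsFrameStarter P) (k : R → Perm I) (ε : ZMod 2) (r : R)
    (x : R × ZMod 2) : ∃! c, c ∈ half I ε ∧ x ∈ develop P k r c := by
  by_cases hx : x.1 = r
  · refine ⟨none, ⟨none_mem_half ε, mem_develop_none.mpr hx⟩, ?_⟩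
    rintro (_ | ⟨i, ε'⟩) ⟨-, hc⟩
    · rfl
    · exact absurd (sub_eq_zero.mpr hx) (hP.fst_ne_zero_of_mem _ _ (mem_develop_some.mp hc))
  · obtain ⟨i, hi, h_unique⟩ := hP.existsUnique_mem (x - (r, ε)) (sub_ne_zero.mpr hx)
    refine ⟨some ((k r).symm i, ε), ⟨some_mem_half.mpr rfl, ?_⟩, ?_⟩
    · rw [mem_develop_some, apply_symm_apply]
      exact hi
    · rintro (_ | ⟨j, ε'⟩) ⟨h_half, hc⟩
      · exact absurd (mem_develop_none.mp hc) hx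
      · obtain rfl : ε' = ε := some_mem_half.mp h_half
        rw [← h_unique _ (mem_develop_some.mp hc), symm_apply_apply]

theorem isPBTD_develop (hP : IsFrameStarter P) {k : R → Perm I}
    (hk : ∀ i x, ∃! r, x - (r, 0) ∈ P (k r i)) :
    IsPBTD (develop P k) (half I 0) (half I 1) where
  union_eq_univ := half_zero_union_half_one
  not_isDiag := hP.not_isDiag_develop k
  existsUnique_cell x y hxy :=
    (eq_or_ne x.1 y.1).elim (hP.existsUnique_develop_eq_of_fst_eq k hxy)
      (hP.existsUnique_develop_eq_of_fst_ne k)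
  existsUnique_row
    | none, x => by
      simp only [mem_develop_none]
      exact existsUnique_eq'
    | some (i, ε), x => by
      have h_sub (r : R) : x - (r, ε) = x - (0, ε) - (r, 0) := by ext <;> simp
      refine (existsUnique_congr fun r => ?_).mpr (hk i (x - (0, ε)))
      rw [mem_develop_some, h_sub]
  existsUnique_first := hP.existsUnique_mem_develop k 0
  existsUnique_last := hP.existsUnique_mem_develop k 1

end IsFrameStarter

/-- A frame starter in `ℤ₃ × ℤ₃ × ℤ₂`, found by computer search. -/
def starterNine : Fin 8 → Sym2 ((ZMod 3 × ZMod 3) × ZMod 2) :=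
  ![s(((1, 1), 0), ((2, 1), 0)),
    s(((1, 1), 1), ((2, 0), 1)),
    s(((1, 2), 0), ((2, 2), 1)),
    s(((0, 1), 0), ((2, 0), 0)),
    s(((0, 1), 1), ((0, 2), 1)),
    s(((1, 0), 0), ((1, 2), 1)),
    s(((0, 2), 0), ((2, 1), 1)),
    s(((1, 0), 1), ((2, 2), 0))]

/-- The ordering of the rows that goes with `starterNine`: row `(s, t)` rotates columns `0, 1, 2` by
`s` and columns `3, 4, 5` by `t`. The columns are one-factors because the six points of the pairs
`starterNine k + ((k, 0), 0)`, `k = 0, 1, 2`, lie in different cosets of `({0} × ℤ₃) × {0}`, the six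
points of `starterNine (3 + k) + ((0, k), 0)` lie in different cosets of `(ℤ₃ × {0}) × {0}`, and the
two points of `starterNine 6` and of `starterNine 7` lie in different cosets of
`(ℤ₃ × ℤ₃) × {0}`. -/
def orderNine (r : ZMod 3 × ZMod 3) : Perm (Fin 8) :=
  c[0, 1, 2] ^ r.1.val * c[3, 4, 5] ^ r.2.val

theorem isFrameStarter_starterNine : IsFrameStarter starterNine where
  fst_ne_zero_of_mem := by decide +kernel
  existsUnique_mem := by simp only [ExistsUnique]; decide +kernel
  fst_ne_fst_of_eq_mk := by decide +kernel
  existsUnique_difference := by simp only [ExistsUnique]; decide +kernel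

theorem existsUnique_sub_mem_starterNine :
    ∀ i x, ∃! r, x - (r, 0) ∈ starterNine (orderNine r i) := by
  simp only [ExistsUnique]
  decide +kernel

/-- The numbering of the columns: left half, common column `8`, right half. -/
def columnNumber : Option (Fin 8 × ZMod 2) → Fin 17
  | none => 8
  | some (i, ε) => ⟨i + 9 * ε.val, by have := ε.val_lt; omega⟩

theorem columnNumber_bijective : Function.Bijective columnNumber := by
  decide +kernel

theorem mem_half_zero_iff (c : Option (Fin 8 × ZMod 2)) :
    c ∈ half (Fin 8) 0 ↔ (columnNumber c).val < 9 := by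
  rcases c with _ | ⟨i, ε⟩
  · simp [none_mem_half, columnNumber]
  · rw [some_mem_half]
    revert i ε
    decide

theorem mem_half_one_iff (c : Option (Fin 8 × ZMod 2)) :
    c ∈ half (Fin 8) 1 ↔ 8 ≤ (columnNumber c).val := by
  rcases c with _ | ⟨i, ε⟩
  · simp [none_mem_half, columnNumber]
  · rw [some_mem_half]
    revert i ε
    decide

/-- **There exists a partitioned balanced tournament design of side 9**:
an arrangement `T` of the 153 distinct unordered pairs of the 18-element set
`Fin 18` into a 9 × 17 array such that
(1) every element is contained in precisely one cell of each column,
(2) every element is contained in at most two cells of any row,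
(3) in each row the 9 cells in the first 9 columns form a one-factor, and
(4) in each row the 9 cells in the last 9 columns form a one-factor. -/
theorem exists_pbtd_nine :
    ∃ T : Fin 9 → Fin 17 → Sym2 (Fin 18),
      -- the 153 distinct unordered pairs each occur in exactly one cell
      (∀ x y : Fin 18, x ≠ y → ∃! p : Fin 9 × Fin 17, T p.1 p.2 = s(x, y)) ∧
      -- (1) every element lies in precisely one cell of each column
      (∀ j : Fin 17, ∀ x : Fin 18, ∃! i : Fin 9, x ∈ T i j) ∧
      -- (2) every element lies in at most two cells of any row
      (∀ i : Fin 9, ∀ x : Fin 18,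
        (Finset.univ.filter fun j : Fin 17 => x ∈ T i j).card ≤ 2) ∧
      -- (3) each row contains a one-factor in the first 9 columns
      (∀ i : Fin 9, ∀ x : Fin 18, ∃! j : Fin 17, j.val < 9 ∧ x ∈ T i j) ∧
      -- (4) each row contains a one-factor in the last 9 columns
      (∀ i : Fin 9, ∀ x : Fin 18, ∃! j : Fin 17, 8 ≤ j.val ∧ x ∈ T i j) := by
  let κ := (ofBijective columnNumber columnNumber_bijective).symm
  have hκ (j : Fin 17) : columnNumber (κ j) = j := ofBijective_apply_symm_apply _ _ j
  have hT := (isFrameStarter_starterNine.isPBTD_develop existsUnique_sub_mem_starterNine).reindex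
    (finProdFinEquiv (m := 3) (n := 3)).symm κ
    (((finProdFinEquiv (m := 3) (n := 3)).prodCongr (.refl (Fin 2))).trans finProdFinEquiv)
  refine ⟨_, hT.existsUnique_cell, hT.existsUnique_row, hT.card_filter_mem_le_two,
    fun i x => ?_, fun i x => ?_⟩
  · simpa only [Set.mem_preimage, mem_half_zero_iff, hκ] using hT.existsUnique_first i x
  · simpa only [Set.mem_preimage, mem_half_one_iff, hκ] using hT.existsUnique_last i x
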